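/- Let α ∈ ℂ with α ≠ 0 and let R ∈ ℂ(z)^{m×m}. Then R is para-skew-Hermitian if and only if there exist a natural number p and constant matrices A ∈ ℂ^{p×p}, B, C ∈ ℂ^{p×m}, D ∈ ℂ^{m×m} such that det(z·A − A^H) ≠ 0 in ℂ(z) and (α + conj(α)·z)·R = (z·D − D^H) + (z·B^H − C^H)·(z·A − A^H)⁻¹·(z·C − B). -/

import Mathlib

open Polynomial Matrix

set_option synthInstance.maxHeartbeats 1000000
set_option maxHeartbeats 1000000

noncomputable section

/-- Coefficientwise complex conjugation on rational functions. -/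
def conjRF : RatFunc ℂ →+* RatFunc ℂ :=
  RatFunc.mapRingHom (Polynomial.mapRingHom (starRingEnd ℂ))
    (by
      intro x hx
      simp only [Submonoid.mem_comap, mem_nonZeroDivisors_iff_ne_zero] at *
      intro h
      exact hx (Polynomial.map_injective _ (starRingEnd ℂ).injective (by simpa using h)))

/-- Substitution of `g` for the variable in `f`. -/
def subst (g f : RatFunc ℂ) : RatFunc ℂ := RatFunc.eval (algebraMap ℂ (RatFunc ℂ)) g f

/-- Constant complex matrices regarded as matrices over `ℂ(z)`. -/
def toRF {n o : Type*} (A : Matrix n o ℂ) : Matrix n o (RatFunc ℂ) :=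
  A.map (algebraMap ℂ (RatFunc ℂ))

/-- The para-conjugate `R^*(1/z)`. -/
def paraConj {n : Type*} (R : Matrix n n (RatFunc ℂ)) : Matrix n n (RatFunc ℂ) :=
  fun i j => subst (RatFunc.X)⁻¹ (conjRF (R j i))

def IsParaHermitian {n : Type*} (R : Matrix n n (RatFunc ℂ)) : Prop := paraConj R = R

def IsParaSkewHermitian {n : Type*} (R : Matrix n n (RatFunc ℂ)) : Prop := paraConj R = -R

/-- The variable `z` of `ℂ(z)`. -/
def zz : RatFunc ℂ := RatFunc.X

/-- Coefficientwise-conjugate transpose of a matrix over `ℂ(z)`. -/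
def conjT {a b : Type*} (R : Matrix a b (RatFunc ℂ)) : Matrix b a (RatFunc ℂ) :=
  fun i j => conjRF (R j i)

/-- Entrywise substitution of `g` into a matrix over `ℂ(z)`. -/
def substMat {a b : Type*} (g : RatFunc ℂ) (R : Matrix a b (RatFunc ℂ)) :
    Matrix a b (RatFunc ℂ) :=
  fun i j => subst g (R i j)

/-!
With `c = α + ᾱ z` one has `R^*(1/z) = -R` if and only if `c R = T - z T^*(1/z)` for `T = α R`,
and for such `R` every realization `T = Q (z E - F)⁻¹ V` with constant `Q, E, F, V` doubles to
`A = [0, E; F^H, 0]`, `B = [-V; 0]`, `C = [0; -Q^H]`, `D = 0`. Every rational matrix has such a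
realization, since the realizable matrices are closed under sums, products and inverses and contain
the constants and the scalar matrix `z`. Conversely, para-conjugation multiplies each of the
pencils in the parametrization by `-1/z` up to swapping the outer two.
-/

section Pencil

variable {K L : Type*} [CommRing K] [CommRing L] [Algebra K L] {a b c d : Type*}

/-- The matrix pencil `z E - F` with constant coefficient matrices `E` and `F` over `K`, evaluated
at an element `z` of a `K`-algebra `L`. -/
def pencil (z : L) (E F : Matrix a b K) : Matrix a b L :=
  z • E.map (algebraMap K L) - F.map (algebraMap K L)

lemma pencil_zero_left (z : L) (F : Matrix a b K) : pencil z 0 F = -F.map (algebraMap K L) := by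
  simp [pencil]

lemma pencil_zero_right (z : L) (E : Matrix a b K) :
    pencil z E 0 = z • E.map (algebraMap K L) := by
  simp [pencil]

lemma pencil_fromBlocks (z : L) (E₁₁ F₁₁ : Matrix a b K) (E₁₂ F₁₂ : Matrix a c K)
    (E₂₁ F₂₁ : Matrix d b K) (E₂₂ F₂₂ : Matrix d c K) :
    pencil z (fromBlocks E₁₁ E₁₂ E₂₁ E₂₂) (fromBlocks F₁₁ F₁₂ F₂₁ F₂₂) =
      fromBlocks (pencil z E₁₁ F₁₁) (pencil z E₁₂ F₁₂) (pencil z E₂₁ F₂₁) (pencil z E₂₂ F₂₂) := by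
  ext (i | i) (j | j) <;> rfl

lemma pencil_fromRows (z : L) (E₁ F₁ : Matrix a b K) (E₂ F₂ : Matrix c b K) :
    pencil z (fromRows E₁ E₂) (fromRows F₁ F₂) = fromRows (pencil z E₁ F₁) (pencil z E₂ F₂) := by
  ext (i | i) j <;> rfl

lemma pencil_fromCols (z : L) (E₁ F₁ : Matrix a b K) (E₂ F₂ : Matrix a c K) :
    pencil z (fromCols E₁ E₂) (fromCols F₁ F₂) = fromCols (pencil z E₁ F₁) (pencil z E₂ F₂) := by
  ext i (j | j) <;> rfl

end Pencil

lemma submatrix_mul_inv_submatrix_mul {S a b ι κ : Type*} [CommRing S] [Fintype ι] [DecidableEq ι]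
    [Fintype κ] [DecidableEq κ] (U : Matrix a ι S) (P : Matrix ι ι S) (W : Matrix ι b S)
    (e : κ ≃ ι) :
    U.submatrix id e * (P.submatrix e e)⁻¹ * W.submatrix e id = U * P⁻¹ * W := by
  rw [inv_submatrix_equiv, submatrix_mul_equiv, submatrix_mul_equiv, submatrix_id_id]

section Realization

variable {K L : Type*} [CommRing K] [CommRing L] [Algebra K L] {z : L} {a b c : Type*}

variable (K z) in
/-- A matrix `T` over `L` is realizable if `T = Q (z E - F)⁻¹ V` for constant matrices `Q`, `E`,
`F`, `V` over `K` with `z E - F` invertible (a descriptor realization without feedthrough). -/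
def IsRealizable (T : Matrix a b L) : Prop :=
  ∃ (p : ℕ) (E F : Matrix (Fin p) (Fin p) K) (Q : Matrix a (Fin p) K) (V : Matrix (Fin p) b K),
    IsUnit (pencil z E F).det ∧
      T = Q.map (algebraMap K L) * (pencil z E F)⁻¹ * V.map (algebraMap K L)

lemma IsRealizable.of_pencil_mul_eq {ι : Type*} [Fintype ι] [DecidableEq ι] {E F : Matrix ι ι K}
    {V : Matrix ι b K} {x : Matrix ι b L} (Q : Matrix a ι K) (hdet : IsUnit (pencil z E F).det)
    (hx : pencil z E F * x = V.map (algebraMap K L)) :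
    IsRealizable K z (Q.map (algebraMap K L) * x) := by
  let e := (Fintype.equivFin ι).symm
  refine ⟨Fintype.card ι, E.submatrix e e, F.submatrix e e, Q.submatrix id e, V.submatrix e id,
    ?_, ?_⟩
  · change IsUnit ((pencil z E F).submatrix e e).det
    rwa [det_submatrix_equiv_self]
  · refine Eq.trans ?_ (submatrix_mul_inv_submatrix_mul (Q.map (algebraMap K L)) (pencil z E F)
      (V.map (algebraMap K L)) e).symm
    rw [← hx, Matrix.mul_assoc, nonsing_inv_mul_cancel_left _ _ hdet]

lemma IsRealizable.exists_pencil_mul_eq {T : Matrix a b L} (hT : IsRealizable K z T) :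
    ∃ (p : ℕ) (E F : Matrix (Fin p) (Fin p) K) (Q : Matrix a (Fin p) K) (V : Matrix (Fin p) b K)
      (x : Matrix (Fin p) b L), IsUnit (pencil z E F).det ∧
        pencil z E F * x = V.map (algebraMap K L) ∧ Q.map (algebraMap K L) * x = T := by
  obtain ⟨p, E, F, Q, V, hdet, rfl⟩ := hT
  exact ⟨p, E, F, Q, V, _, hdet, mul_nonsing_inv_cancel_left _ _ hdet,
    (Matrix.mul_assoc _ _ _).symm⟩

variable (z) in
lemma isRealizable_map_algebraMap [Finite a] (M : Matrix a b K) :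
    IsRealizable K z (M.map (algebraMap K L)) := by
  classical
  have := Fintype.ofFinite a
  have hpencil : pencil z (0 : Matrix a a K) (-1) = 1 := by
    simp [pencil_zero_left, Matrix.map_neg _ (map_neg (algebraMap K L))]
  simpa using IsRealizable.of_pencil_mul_eq (z := z) (E := 0) (F := -1) (V := M)
    (x := M.map (algebraMap K L)) (1 : Matrix a a K) (by simp [hpencil]) (by simp [hpencil])

lemma IsRealizable.add {S T : Matrix a b L} (hS : IsRealizable K z S) (hT : IsRealizable K z T) :
    IsRealizable K z (S + T) := by
  obtain ⟨p, E, F, Q, V, x, hdet, hx, rfl⟩ := hS.exists_pencil_mul_eq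
  obtain ⟨q, E', F', Q', V', x', hdet', hx', rfl⟩ := hT.exists_pencil_mul_eq
  have hpencil : pencil z (fromBlocks E 0 0 E') (fromBlocks F 0 0 F') =
      fromBlocks (pencil z E F) 0 0 (pencil z E' F') := by
    simp [pencil_fromBlocks, pencil_zero_left]
  have hsol := IsRealizable.of_pencil_mul_eq (V := fromRows V V') (x := fromRows x x')
    (fromCols Q Q') (by rw [hpencil, det_fromBlocks_zero₂₁]; exact hdet.mul hdet')
    (by simp [hpencil, fromBlocks_mul_fromRows, fromRows_map, hx, hx'])
  rwa [fromCols_map, fromCols_mul_fromRows] at hsol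

lemma IsRealizable.mul [Fintype b] {S : Matrix a b L} {T : Matrix b c L}
    (hS : IsRealizable K z S) (hT : IsRealizable K z T) : IsRealizable K z (S * T) := by
  obtain ⟨p, E, F, Q, V, x, hdet, hx, rfl⟩ := hS.exists_pencil_mul_eq
  obtain ⟨q, E', F', Q', V', x', hdet', hx', rfl⟩ := hT.exists_pencil_mul_eq
  have hpencil : pencil z (fromBlocks E 0 0 E') (fromBlocks F (V * Q') 0 F') =
      fromBlocks (pencil z E F) (-(V * Q').map (algebraMap K L)) 0 (pencil z E' F') := by
    simp [pencil_fromBlocks, pencil_zero_left]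
  have hsol := IsRealizable.of_pencil_mul_eq (V := fromRows 0 V')
    (x := fromRows (x * (Q'.map (algebraMap K L) * x')) x') (fromCols Q 0)
    (by rw [hpencil, det_fromBlocks_zero₂₁]; exact hdet.mul hdet')
    (by simp [hpencil, fromBlocks_mul_fromRows, fromRows_map, Matrix.map_mul, hx', ← hx,
      Matrix.mul_assoc])
  simpa [fromCols_map, fromCols_mul_fromRows, Matrix.mul_assoc] using hsol

lemma IsRealizable.inv [Fintype a] [DecidableEq a] {T : Matrix a a L} (hT : IsRealizable K z T)
    (hdetT : IsUnit T.det) : IsRealizable K z T⁻¹ := by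
  obtain ⟨p, E, F, Q, V, x, hdet, hx, rfl⟩ := hT.exists_pencil_mul_eq
  have hpencil : pencil z (fromBlocks E 0 0 0) (fromBlocks F (-V) (-Q) 0) =
      fromBlocks (pencil z E F) (V.map (algebraMap K L)) (Q.map (algebraMap K L)) 0 := by
    simp [pencil_fromBlocks, pencil_zero_left,
      Matrix.map_neg _ (map_neg (algebraMap K L))]
  -- The Schur complement of the upper left block is `-T`.
  have hdet_block : IsUnit (pencil z (fromBlocks E 0 0 0) (fromBlocks F (-V) (-Q) 0)).det := by
    have := invertibleOfIsUnitDet _ hdet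
    rw [hpencil, det_fromBlocks₁₁, ← hx, Matrix.mul_assoc, Matrix.invOf_mul_cancel_left,
      zero_sub, det_neg]
    exact hdet.mul ((isUnit_one.neg.pow _).mul hdetT)
  have hsol := IsRealizable.of_pencil_mul_eq (V := fromRows 0 1)
    (x := fromRows (x * (Q.map (algebraMap K L) * x)⁻¹) (-(Q.map (algebraMap K L) * x)⁻¹))
    (fromCols (0 : Matrix a (Fin p) K) (-1)) hdet_block
    (by
      rw [hpencil, fromBlocks_mul_fromRows, ← Matrix.mul_assoc, ← Matrix.mul_assoc, hx,
        mul_nonsing_inv _ hdetT]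
      simp [fromRows_map])
  simpa [fromCols_map, fromCols_mul_fromRows, Matrix.map_neg _ (map_neg (algebraMap K L))]
    using hsol

lemma IsRealizable.sum [Finite a] {ι : Type*} {T : ι → Matrix a b L} (s : Finset ι)
    (hT : ∀ i ∈ s, IsRealizable K z (T i)) : IsRealizable K z (∑ i ∈ s, T i) :=
  Finset.sum_induction T (IsRealizable K z) (fun _ _ ↦ IsRealizable.add)
    (by simpa using isRealizable_map_algebraMap z (0 : Matrix a b K)) hT

variable (K z) in
lemma isRealizable_scalar_self [Fintype a] [DecidableEq a] :
    IsRealizable K z (scalar a z) := by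
  have hpencil : pencil z (fromBlocks (0 : Matrix a a K) (-1) 0 (0 : Matrix a a K))
      (fromBlocks (-1) 0 0 (-1)) = fromBlocks 1 (-scalar a z) 0 1 := by
    simp [pencil_fromBlocks, pencil_zero_left, pencil_zero_right, smul_one_eq_diagonal,
      Matrix.map_neg _ (map_neg (algebraMap K L))]
  have hsol := IsRealizable.of_pencil_mul_eq (z := z) (E := fromBlocks 0 (-1) 0 0)
    (F := fromBlocks (-1) 0 0 (-1)) (V := fromRows 0 1) (x := fromRows (scalar a z) 1)
    (fromCols (1 : Matrix a a K) (0 : Matrix a a K))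
    (by simp [hpencil]) (by simp [hpencil, fromBlocks_mul_fromRows, fromRows_map])
  simpa [fromCols_map, fromCols_mul_fromRows] using hsol

end Realization

section RealizationField

variable {K L : Type*} [Field K] [Field L] [Algebra K L] {z : L} {a b : Type*}

lemma isRealizable_scalar_of_mem_adjoin [Fintype a] [DecidableEq a] {f : L}
    (hf : f ∈ IntermediateField.adjoin K {z}) : IsRealizable K z (scalar a f) := by
  induction hf using IntermediateField.adjoin_induction with
  | mem f hf => rw [Set.mem_singleton_iff.1 hf]; exact isRealizable_scalar_self K z
  | algebraMap k => simpa using isRealizable_map_algebraMap z (scalar a k)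
  | add f g _ _ hf hg => rw [map_add]; exact hf.add hg
  | mul f g _ _ hf hg => rw [map_mul]; exact hf.mul hg
  | inv f _ hf =>
    rcases eq_or_ne f 0 with rfl | hf0
    · rwa [_root_.inv_zero]
    · have hinv : (scalar a f)⁻¹ = scalar a f⁻¹ :=
        inv_eq_right_inv (by rw [← map_mul, mul_inv_cancel₀ hf0, map_one])
      rw [← hinv]
      exact hf.inv (by simp [hf0])

lemma isRealizable_of_adjoin_eq_top [Finite a] [Finite b]
    (hz : IntermediateField.adjoin K {z} = ⊤) (T : Matrix a b L) : IsRealizable K z T := by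
  classical
  have := Fintype.ofFinite a
  have := Fintype.ofFinite b
  rw [matrix_eq_sum_single T]
  refine IsRealizable.sum _ fun i _ ↦ IsRealizable.sum _ fun j _ ↦ ?_
  have hscalar : IsRealizable K z (scalar a (T i j)) :=
    isRealizable_scalar_of_mem_adjoin (hz ▸ IntermediateField.mem_top)
  have hsingle : scalar a (T i j) * (single i j (1 : K)).map (algebraMap K L) =
      single i j (T i j) := by
    rw [scalar_apply, ← smul_eq_diagonal_mul]
    simp [map_single]
  exact hsingle ▸ hscalar.mul (isRealizable_map_algebraMap z (single i j (1 : K)))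

end RealizationField

section Star

variable {K L : Type*} [CommRing K] [StarRing K] [CommRing L] [StarRing L] [Algebra K L]
  [StarModule K L] {z : L} {a b n ι : Type*}

lemma conjTranspose_map_algebraMap (M : Matrix a b K) :
    (M.map (algebraMap K L))ᴴ = Mᴴ.map (algebraMap K L) :=
  (conjTranspose_map _ algebraMap_star_comm).symm

lemma pencil_conjTranspose (hz : z * star z = 1) (E F : Matrix a b K) :
    (pencil z E F)ᴴ = -star z • pencil z Fᴴ Eᴴ := by
  rw [pencil, pencil, conjTranspose_sub, conjTranspose_smul, conjTranspose_map_algebraMap,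
    conjTranspose_map_algebraMap, smul_sub, smul_smul, neg_mul, mul_comm, hz]
  module

lemma neg_smul_conjTranspose_pencil (hz : z * star z = 1) (E F : Matrix a b K) :
    -z • (pencil z E F)ᴴ = pencil z Fᴴ Eᴴ := by
  rw [pencil_conjTranspose hz, smul_smul, neg_mul_neg, hz, one_smul]

variable [Fintype ι] [DecidableEq ι]

lemma neg_smul_conjTranspose_mul_inv (hz : z * star z = 1) {P : Matrix ι ι L}
    (hP : IsUnit P.det) : (-z • Pᴴ) * (-star z • P⁻¹ᴴ) = 1 := by
  rw [smul_mul_smul_comm, neg_mul_neg, hz, one_smul, ← conjTranspose_mul, nonsing_inv_mul _ hP,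
    conjTranspose_one]

lemma conjTranspose_pencil_mul_inv_mul (hz : z * star z = 1) {A : Matrix ι ι K}
    (hA : IsUnit (pencil z A Aᴴ).det) (B C : Matrix ι n K) :
    (pencil z Bᴴ Cᴴ * (pencil z A Aᴴ)⁻¹ * pencil z C B)ᴴ =
      -star z • (pencil z Bᴴ Cᴴ * (pencil z A Aᴴ)⁻¹ * pencil z C B) := by
  have hinv : (pencil z A Aᴴ)⁻¹ = -star z • (pencil z A Aᴴ)⁻¹ᴴ := by
    have hmul := neg_smul_conjTranspose_mul_inv hz hA
    rw [neg_smul_conjTranspose_pencil hz, conjTranspose_conjTranspose] at hmul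
    exact inv_eq_right_inv hmul
  rw [conjTranspose_mul, conjTranspose_mul, pencil_conjTranspose hz, pencil_conjTranspose hz,
    conjTranspose_conjTranspose, conjTranspose_conjTranspose]
  conv_rhs => rw [hinv]
  simp only [Matrix.smul_mul, Matrix.mul_smul, Matrix.mul_assoc]

lemma isUnit_det_and_sub_smul_conjTranspose_eq (hz : z * star z = 1) {E F : Matrix ι ι K}
    (hP : IsUnit (pencil z E F).det) (Q : Matrix n ι K) (V : Matrix ι n K) {T : Matrix n n L}
    (hT : T = Q.map (algebraMap K L) * (pencil z E F)⁻¹ * V.map (algebraMap K L)) :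
    IsUnit (pencil z (fromBlocks 0 E Fᴴ 0) (fromBlocks 0 E Fᴴ 0)ᴴ).det ∧
      T - z • Tᴴ = pencil z (fromRows (-V) 0)ᴴ (fromRows 0 (-Qᴴ))ᴴ *
        (pencil z (fromBlocks 0 E Fᴴ 0) (fromBlocks 0 E Fᴴ 0)ᴴ)⁻¹ *
          pencil z (fromRows 0 (-Qᴴ)) (fromRows (-V) 0) := by
  have hA : pencil z (fromBlocks 0 E Fᴴ 0) (fromBlocks 0 E Fᴴ 0)ᴴ =
      fromBlocks 0 (pencil z E F) (-z • (pencil z E F)ᴴ) 0 := by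
    rw [neg_smul_conjTranspose_pencil hz, fromBlocks_conjTranspose, pencil_fromBlocks]
    simp [pencil_zero_left]
  have hinv : pencil z (fromBlocks 0 E Fᴴ 0) (fromBlocks 0 E Fᴴ 0)ᴴ *
      fromBlocks 0 (-star z • (pencil z E F)⁻¹ᴴ) (pencil z E F)⁻¹ 0 = 1 := by
    rw [hA, fromBlocks_multiply, neg_smul_conjTranspose_mul_inv hz hP, mul_nonsing_inv _ hP]
    simp
  have hleft : pencil z (fromRows (-V) 0)ᴴ (fromRows 0 (-Qᴴ))ᴴ =
      fromCols (-z • (V.map (algebraMap K L))ᴴ) (Q.map (algebraMap K L)) := by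
    simp [conjTranspose_fromRows_eq_fromCols_conjTranspose, pencil_fromCols, pencil_zero_left,
      pencil_zero_right, conjTranspose_map_algebraMap, Matrix.map_neg _ (map_neg (algebraMap K L))]
  have hright : pencil z (fromRows 0 (-Qᴴ)) (fromRows (-V) 0) =
      fromRows (V.map (algebraMap K L)) (-z • (Q.map (algebraMap K L))ᴴ) := by
    simp [pencil_fromRows, pencil_zero_left, pencil_zero_right, conjTranspose_map_algebraMap,
      Matrix.map_neg _ (map_neg (algebraMap K L))]
  have hcancel : -z • (V.map (algebraMap K L))ᴴ * (-star z • (pencil z E F)⁻¹ᴴ) =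
      (V.map (algebraMap K L))ᴴ * (pencil z E F)⁻¹ᴴ := by
    rw [Matrix.smul_mul, Matrix.mul_smul, smul_smul, neg_mul_neg, hz, one_smul]
  refine ⟨isUnit_det_of_right_inverse hinv, ?_⟩
  rw [inv_eq_right_inv hinv, hleft, hright, fromCols_mul_fromBlocks, fromCols_mul_fromRows, hT,
    Matrix.mul_zero, Matrix.mul_zero, zero_add, add_zero, hcancel, Matrix.mul_smul,
    conjTranspose_mul, conjTranspose_mul, ← Matrix.mul_assoc]
  module

lemma IsRealizable.exists_sub_smul_conjTranspose_eq (hz : z * star z = 1) {T : Matrix n n L}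
    (hT : IsRealizable K z T) :
    ∃ (p : ℕ) (A : Matrix (Fin p) (Fin p) K) (B C : Matrix (Fin p) n K),
      IsUnit (pencil z A Aᴴ).det ∧
        T - z • Tᴴ = pencil z Bᴴ Cᴴ * (pencil z A Aᴴ)⁻¹ * pencil z C B := by
  obtain ⟨p, E, F, Q, V, hP, hT⟩ := hT
  obtain ⟨hdet, hskew⟩ := isUnit_det_and_sub_smul_conjTranspose_eq hz hP Q V hT
  let e : Fin (p + p) ≃ Fin p ⊕ Fin p := finSumFinEquiv.symm
  refine ⟨p + p, (fromBlocks 0 E Fᴴ 0).submatrix e e, (fromRows (-V) 0).submatrix e id,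
    (fromRows 0 (-Qᴴ)).submatrix e id, ?_, ?_⟩
  · change IsUnit ((pencil z (fromBlocks 0 E Fᴴ 0) (fromBlocks 0 E Fᴴ 0)ᴴ).submatrix e e).det
    rwa [det_submatrix_equiv_self]
  · exact hskew.trans (submatrix_mul_inv_submatrix_mul _ _ _ e).symm

end Star

/-- The parametrization over an arbitrary field `K` with involution: `L = K(z)` is a field with an
involution extending that of `K` and sending `z` to `z⁻¹`, so `Rᴴ` is the para-conjugate of `R`. -/
theorem paraSkewHermitian_parametrization_general {K L n : Type*} [Field K] [StarRing K] [Field L]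
    [StarRing L] [Algebra K L] [StarModule K L] [Finite n] {z : L} (hz : z * star z = 1)
    (hadjoin : IntermediateField.adjoin K {z} = ⊤) {α : K}
    (hα : algebraMap K L α + algebraMap K L (star α) * z ≠ 0) (R : Matrix n n L) :
    Rᴴ = -R ↔
      ∃ (p : ℕ) (A : Matrix (Fin p) (Fin p) K) (B C : Matrix (Fin p) n K) (D : Matrix n n K),
        (pencil z A Aᴴ).det ≠ 0 ∧
        (algebraMap K L α + algebraMap K L (star α) * z) • R =
          pencil z D Dᴴ + pencil z Bᴴ Cᴴ * (pencil z A Aᴴ)⁻¹ * pencil z C B := by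
  constructor
  · intro hR
    obtain ⟨p, A, B, C, hA, hT⟩ := (isRealizable_of_adjoin_eq_top hadjoin
      (algebraMap K L α • R)).exists_sub_smul_conjTranspose_eq hz
    refine ⟨p, A, B, C, 0, hA.ne_zero, ?_⟩
    rw [← hT, conjTranspose_smul, hR, algebraMap_star_comm, conjTranspose_zero, pencil_zero_left]
    simp only [Matrix.map_zero _ (map_zero (algebraMap K L))]
    module
  · rintro ⟨p, A, B, C, D, hA, hR⟩
    have hskew : ((algebraMap K L α + algebraMap K L (star α) * z) • R)ᴴ =
        -star z • (algebraMap K L α + algebraMap K L (star α) * z) • R := by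
      rw [hR, conjTranspose_add, conjTranspose_pencil_mul_inv_mul hz hA.isUnit,
        pencil_conjTranspose hz, conjTranspose_conjTranspose, smul_add]
    have hstar : star (algebraMap K L α + algebraMap K L (star α) * z) =
        star z * (algebraMap K L α + algebraMap K L (star α) * z) := by
      rw [star_add, star_mul, algebraMap_star_comm, star_star]
      linear_combination (-star (algebraMap K L α)) * hz
    have hcancel : (star z * (algebraMap K L α + algebraMap K L (star α) * z)) • Rᴴ =
        (star z * (algebraMap K L α + algebraMap K L (star α) * z)) • -R := by
      rw [← hstar, ← conjTranspose_smul, hskew, hstar]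
      module
    exact smul_right_injective _ (mul_ne_zero (right_ne_zero_of_mul_eq_one hz) hα) hcancel

lemma eval₂_X_inv_ne_zero {p : ℂ[X]} (hp : p ≠ 0) :
    p.eval₂ (algebraMap ℂ (RatFunc ℂ)) (RatFunc.X)⁻¹ ≠ 0 := fun h ↦
  RatFunc.transcendental_X (IsAlgebraic.inv_iff.1 ⟨p, hp, h⟩)

/-- Para-conjugation of scalars, `f ↦ (conj f)(1/z)`. -/
def paraConjHom : RatFunc ℂ →+* RatFunc ℂ where
  toFun f := subst (RatFunc.X)⁻¹ (conjRF f)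
  map_one' := by rw [map_one, subst, RatFunc.eval_one]
  map_zero' := by rw [map_zero, subst, RatFunc.eval_zero]
  map_add' f g := by
    rw [map_add]
    exact RatFunc.eval_add _ _ (eval₂_X_inv_ne_zero (RatFunc.denom_ne_zero _))
      (eval₂_X_inv_ne_zero (RatFunc.denom_ne_zero _))
  map_mul' f g := by
    rw [map_mul]
    exact RatFunc.eval_mul _ _ (eval₂_X_inv_ne_zero (RatFunc.denom_ne_zero _))
      (eval₂_X_inv_ne_zero (RatFunc.denom_ne_zero _))

lemma conjRF_algebraMap (p : ℂ[X]) :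
    conjRF (algebraMap ℂ[X] (RatFunc ℂ) p) =
      algebraMap ℂ[X] (RatFunc ℂ) (p.map (starRingEnd ℂ)) := by
  have hmap := RatFunc.map_apply_div (Polynomial.mapRingHom (starRingEnd ℂ))
    (nonZeroDivisors_le_comap_nonZeroDivisors_of_injective _
      (Polynomial.map_injective _ (starRingEnd ℂ).injective)) p 1
  simp only [map_one, div_one] at hmap
  exact hmap

lemma paraConjHom_C (k : ℂ) : paraConjHom (RatFunc.C k) = RatFunc.C (star k) := by
  change subst _ (conjRF _) = _
  rw [← RatFunc.algebraMap_C, conjRF_algebraMap, Polynomial.map_C, RatFunc.algebraMap_C, subst,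
    RatFunc.eval_C]
  rfl

lemma paraConjHom_X : paraConjHom RatFunc.X = RatFunc.X⁻¹ := by
  change subst _ (conjRF _) = _
  rw [← RatFunc.algebraMap_X, conjRF_algebraMap, Polynomial.map_X, RatFunc.algebraMap_X, subst,
    RatFunc.eval_X]

lemma paraConjHom_comp_self : paraConjHom.comp paraConjHom = RingHom.id (RatFunc ℂ) := by
  refine IsLocalization.ringHom_ext (nonZeroDivisors ℂ[X]) (Polynomial.ringHom_ext ?_ ?_)
  · simp [paraConjHom_C]
  · simp [paraConjHom_X]

/-- Para-conjugation as the involution of `ℂ(z)`, making `Rᴴ` the para-conjugate of a matrix `R`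
over `ℂ(z)`. -/
local instance ratFuncParaStarRing : StarRing (RatFunc ℂ) where
  star := paraConjHom
  star_involutive := RingHom.congr_fun paraConjHom_comp_self
  star_mul f g := by rw [mul_comm, map_mul]
  star_add := map_add paraConjHom

local instance ratFuncParaStarModule : StarModule ℂ (RatFunc ℂ) where
  star_smul k f := by
    rw [Algebra.smul_def, Algebra.smul_def, star_mul, mul_comm]
    exact congrArg (· * star f) (paraConjHom_C k)

lemma X_mul_star_X : (RatFunc.X : RatFunc ℂ) * star RatFunc.X = 1 := by
  change _ * paraConjHom _ = 1
  rw [paraConjHom_X, mul_inv_cancel₀ RatFunc.X_ne_zero]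

lemma C_add_C_mul_X_ne_zero {K : Type*} [Field K] {α : K} (hα : α ≠ 0) (β : K) :
    RatFunc.C α + RatFunc.C β * RatFunc.X ≠ 0 := by
  have hpoly : Polynomial.C α + Polynomial.C β * Polynomial.X ≠ 0 := fun h ↦
    hα (by simpa using congrArg (fun p ↦ p.coeff 0) h)
  simpa using RatFunc.algebraMap_ne_zero hpoly

/-- parametrization of para-skew-Hermitian rational matrices. -/
theorem paraSkewHermitian_parametrization (m : ℕ) (α : ℂ) (hα : α ≠ 0)
    (R : Matrix (Fin m) (Fin m) (RatFunc ℂ)) :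
    IsParaSkewHermitian R ↔
      ∃ (p : ℕ) (A : Matrix (Fin p) (Fin p) ℂ) (B C : Matrix (Fin p) (Fin m) ℂ)
        (D : Matrix (Fin m) (Fin m) ℂ),
        (zz • toRF A - toRF Aᴴ).det ≠ 0 ∧
        (RatFunc.C α + RatFunc.C (starRingEnd ℂ α) * zz) • R =
          (zz • toRF D - toRF Dᴴ) +
            (zz • toRF Bᴴ - toRF Cᴴ) * (zz • toRF A - toRF Aᴴ)⁻¹ * (zz • toRF C - toRF B) := by
  exact paraSkewHermitian_parametrization_general (z := zz) X_mul_star_X RatFunc.adjoin_X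
    (C_add_C_mul_X_ne_zero hα _) R
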